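/- arXiv:2003.09247 — 2 statements merged into one kernel-verified Lean document; each statement's English description precedes it below -/
import Mathlib

section
/- For every large enough integer k the following holds: if T is a path on k vertices, then for every large enough integer n with k dividing n, in the unbiased Waiter-Client game on the edge set of K_n whose winning sets are the T-factors of K_n, Waiter can win in exactly ((k−1)/k)·n rounds; that is, τ_WC(F_{n,T-fac}, 1) = ((k−1)/k)·n. -/
open Finset

/-- `WaiterWins board b win t Cl W` means: starting from the position where Client owns the
elements of `Cl` and Waiter owns the elements of `W`, Waiter can force that within the next `t`
rounds of the `b`-biased Waiter-Client game on the board `board` a position is reached in which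
the predicate `win` holds of (Client's elements, Waiter's elements).  In each round Waiter offers
`b+1` previously unclaimed board elements (or all remaining unclaimed elements, if fewer than
`b+1` remain); Client claims exactly one of them, the rest go to Waiter. -/
def WaiterWins {X : Type*} [DecidableEq X] (board : Finset X) (b : ℕ)
    (win : Finset X → Finset X → Prop) :
    ℕ → Finset X → Finset X → Prop
  | 0, Cl, W => win Cl W
  | (t+1), Cl, W => win Cl W ∨
      ∃ O : Finset X, O.Nonempty ∧ O ⊆ board \ (Cl ∪ W) ∧
        O.card = min (b + 1) ((board \ (Cl ∪ W)).card) ∧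
        ∀ x ∈ O, WaiterWins board b win t (insert x Cl) (W ∪ O.erase x)

/-- `tauWC board F b` : the smallest number of rounds within which Waiter can force Client's
elements to contain some member of the winning family `F`, in the `b`-biased Waiter-Client game
on the board `board`. -/
noncomputable def tauWC {X : Type*} [DecidableEq X] (board : Finset X)
    (F : Set (Finset X)) (b : ℕ) : ℕ :=
  sInf {t | WaiterWins board b (fun Cl _ => ∃ A ∈ F, A ⊆ Cl) t ∅ ∅}

/-- The edge set of the complete graph on `Fin n`. -/
def Kedges (n : ℕ) : Finset (Sym2 (Fin n)) :=
  Finset.univ.filter (fun e => ¬ e.IsDiag)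

/-- The family of edge sets of `H`-factors of `K_n`, where `H` is the graph on `Fin k` with
edge set `E`: vertex-disjoint unions of copies of `H` covering all `n` vertices
(each of the `n/k` copies is given by an embedding `g i`, and the copies partition `Fin n`). -/
def factorFamily (k n : ℕ) (E : Set (Sym2 (Fin k))) : Set (Finset (Sym2 (Fin n))) :=
  {F | ∃ g : Fin (n / k) → Fin k → Fin n,
    (∀ v : Fin n, ∃! p : Fin (n / k) × Fin k, g p.1 p.2 = v) ∧
    (F : Set (Sym2 (Fin n))) = ⋃ i : Fin (n / k), Sym2.map (g i) '' E}

/-- The edge set of the path `0 - 1 - ⋯ - (k−1)` on the vertex set `Fin k`. -/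
def pathEdges (k : ℕ) : Set (Sym2 (Fin k)) :=
  {e | ∃ i j : Fin k, e = s(i, j) ∧ (j : ℕ) = (i : ℕ) + 1}

/-! Waiter builds the paths one after the other, inside the set `S` of vertices that Client's
finished paths avoid; no edge inside `S` has been claimed. Client must add an edge to his current
path in every round. If the path has ends `x ≠ y` and `v` is a vertex of `S` off the path, then
Waiter offers `vx` and `vy`: whichever edge Client takes, `v` becomes an end of the longer path,
and the edge that goes to Waiter joins the two ends of that path, so it never matters again. To
get started, Waiter offers two edges `ab, ac`, then `bx, by`, then `au, aw`: the edges he receives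
all meet `a` or `b`, which are the inner vertices of Client's path, say `u a b x`. No round is
wasted, so the number of rounds is the number of edges of a factor, which is clearly optimal. -/

section Game

variable {X : Type*} [DecidableEq X] {board Cl W : Finset X} {b s t : ℕ}
  {win win' : Finset X → Finset X → Prop}

/-- The elements of the board that Waiter may still offer when Client owns `Cl` and Waiter owns
`W`. -/
def unclaimed (board Cl W : Finset X) : Finset X :=
  board \ (Cl ∪ W)

theorem mem_unclaimed_insert {e f x : X} :
    x ∈ unclaimed board (insert e Cl) (insert f W) ↔
      x ∈ unclaimed board Cl W ∧ x ≠ e ∧ x ≠ f := by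
  simp only [unclaimed, mem_sdiff, mem_union, mem_insert]
  tauto

namespace WaiterWins

theorem of_win (h : win Cl W) : WaiterWins board b win t Cl W := by
  cases t with
  | zero => exact h
  | succ t => exact Or.inl h

theorem mono_rounds (h : WaiterWins board b win s Cl W) (hst : s ≤ t) :
    WaiterWins board b win t Cl W := by
  induction s generalizing t Cl W with
  | zero => exact of_win h
  | succ s ih =>
    obtain ⟨t, rfl⟩ := Nat.exists_eq_add_of_le' (Nat.one_le_of_lt hst)
    rcases h with h | ⟨O, hO, hsub, hcard, hwin⟩
    · exact Or.inl h
    · exact Or.inr ⟨O, hO, hsub, hcard, fun x hx ↦ ih (hwin x hx) (Nat.le_of_succ_le_succ hst)⟩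

theorem bind (h : WaiterWins board b win' s Cl W)
    (hwin : ∀ Cl' W', Cl ⊆ Cl' → win' Cl' W' → WaiterWins board b win t Cl' W') :
    WaiterWins board b win (s + t) Cl W := by
  induction s generalizing Cl W with
  | zero => exact (hwin Cl W Subset.rfl h).mono_rounds (Nat.le_add_left t 0)
  | succ s ih =>
    rcases h with h | ⟨O, hO, hsub, hcard, hnext⟩
    · exact (hwin Cl W Subset.rfl h).mono_rounds (Nat.le_add_left t (s + 1))
    · rw [Nat.add_right_comm]
      exact Or.inr ⟨O, hO, hsub, hcard, fun x hx ↦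
        ih (hnext x hx) fun Cl' W' hCl ↦ hwin Cl' W' ((subset_insert x Cl).trans hCl)⟩

theorem offer_pair {e f : X} (hef : e ≠ f) (he : e ∈ unclaimed board Cl W)
    (hf : f ∈ unclaimed board Cl W)
    (win_e : WaiterWins board 1 win t (insert e Cl) (insert f W))
    (win_f : WaiterWins board 1 win t (insert f Cl) (insert e W)) :
    WaiterWins board 1 win (t + 1) Cl W := by
  have hsub : {e, f} ⊆ unclaimed board Cl W := by simp [insert_subset_iff, he, hf]
  refine Or.inr ⟨{e, f}, insert_nonempty e {f}, hsub, ?_, ?_⟩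
  · have hcard := card_le_card hsub
    rw [card_pair hef] at hcard ⊢
    exact (min_eq_left hcard).symm
  · simp only [forall_mem_insert, mem_singleton, forall_eq]
    rw [erase_insert (by simpa using hef), pair_comm, erase_insert (by simpa using hef.symm),
      union_singleton, union_singleton]
    exact ⟨win_e, win_f⟩

theorem exists_win_card_le (h : WaiterWins board b win t Cl W) :
    ∃ Cl' W', win Cl' W' ∧ #Cl' ≤ #Cl + t := by
  induction t generalizing Cl W with
  | zero => exact ⟨Cl, W, h, le_rfl⟩
  | succ t ih =>
    rcases h with h | ⟨O, ⟨x, hx⟩, -, -, hnext⟩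
    · exact ⟨Cl, W, h, Nat.le_add_right _ _⟩
    · obtain ⟨Cl', W', hwin, hcard⟩ := ih (hnext x hx)
      exact ⟨Cl', W', hwin, by grind [card_insert_le x Cl]⟩

end WaiterWins

theorem tauWC_eq_of_forall_le_card {F : Set (Finset X)}
    (hwin : WaiterWins board b (fun Cl _ ↦ ∃ A ∈ F, A ⊆ Cl) t ∅ ∅) (hF : ∀ A ∈ F, t ≤ #A) :
    tauWC board F b = t := by
  refine le_antisymm (Nat.sInf_le hwin) (le_csInf ⟨t, hwin⟩ fun s hs ↦ ?_)
  obtain ⟨Cl, -, ⟨A, hA, hACl⟩, hcard⟩ := hs.exists_win_card_le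
  calc t ≤ #A := hF A hA
    _ ≤ #Cl := card_le_card hACl
    _ ≤ s := by simpa using hcard

end Game

section Paths

variable {V : Type*} {E E' : Finset (Sym2 V)} {S T : Finset V} {p q : List V} {v x : V}

/-- The list `p` is a path with edges in `E` and vertices in `S`. -/
structure IsPathIn (E : Finset (Sym2 V)) (S : Finset V) (p : List V) : Prop where
  nodup : p.Nodup
  mem : ∀ v ∈ p, v ∈ S
  isChain : p.IsChain (s(·, ·) ∈ E)

namespace IsPathIn

theorem mono (hp : IsPathIn E S p) (hE : E ⊆ E') (hS : S ⊆ T) : IsPathIn E' T p where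
  nodup := hp.nodup
  mem v hv := hS (hp.mem v hv)
  isChain := hp.isChain.imp fun _ _ h ↦ hE h

theorem reverse (hp : IsPathIn E S p) : IsPathIn E S p.reverse where
  nodup := List.nodup_reverse.2 hp.nodup
  mem v hv := hp.mem v (List.mem_reverse.1 hv)
  isChain := List.isChain_reverse.2 (hp.isChain.imp fun _ _ h ↦ Sym2.eq_swap ▸ h)

theorem cons [DecidableEq V] (hp : IsPathIn E S (x :: q)) (hv : v ∈ S) (hvp : v ∉ x :: q) :
    IsPathIn (insert s(x, v) E) S (v :: x :: q) where
  nodup := hp.nodup.cons hvp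
  mem := List.forall_mem_cons.2 ⟨hv, hp.mem⟩
  isChain := .cons_cons (by rw [Sym2.eq_swap]; exact mem_insert_self _ _)
    (hp.mono (subset_insert _ _) Subset.rfl).isChain

end IsPathIn

/-- The lists in `L` are pairwise vertex-disjoint paths on `k` vertices, with edges in `E` and
vertices in `S`. -/
structure IsPathPacking (k : ℕ) (E : Finset (Sym2 V)) (S : Finset V) (L : List (List V)) :
    Prop where
  isPathIn : ∀ p ∈ L, IsPathIn E S p
  length_eq : ∀ p ∈ L, p.length = k
  disjoint : L.Pairwise List.Disjoint

namespace IsPathPacking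

variable {k : ℕ} {L : List (List V)}

theorem nil : IsPathPacking k E S [] := by
  constructor <;> simp

theorem cons [DecidableEq V] (hL : IsPathPacking k E (S \ p.toFinset) L) (hp : IsPathIn E S p)
    (hpk : p.length = k) : IsPathPacking k E S (p :: L) where
  isPathIn := List.forall_mem_cons.2
    ⟨hp, fun r hr ↦ (hL.isPathIn r hr).mono Subset.rfl sdiff_subset⟩
  length_eq := List.forall_mem_cons.2 ⟨hpk, hL.length_eq⟩
  disjoint := List.pairwise_cons.2 ⟨fun r hr v hvp hvr ↦ by
    simpa [hvp] using (hL.isPathIn r hr).mem v hvr, hL.disjoint⟩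

theorem nodup_flatten (hL : IsPathPacking k E S L) : L.flatten.Nodup :=
  List.nodup_flatten.2 ⟨fun p hp ↦ (hL.isPathIn p hp).nodup, hL.disjoint⟩

theorem length_flatten (hL : IsPathPacking k E S L) : L.flatten.length = L.length * k := by
  rw [List.length_flatten, List.eq_replicate_of_mem (a := k) (l := L.map List.length)]
  · simp
  · simpa using hL.length_eq

end IsPathPacking

end Paths

section PathBuilding

variable {V : Type*} [DecidableEq V] {board Cl W : Finset (Sym2 V)} {S T : Finset V}
  {a b c x y : V} {k : ℕ}

/-- The edges inside `S` all lie on the board and are unclaimed. -/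
def IsFree (board Cl W : Finset (Sym2 V)) (S : Finset V) : Prop :=
  ∀ v ∈ S, ∀ w ∈ S, v ≠ w → s(v, w) ∈ unclaimed board Cl W

theorem mem_unclaimed_insert_of_notMem {e : Sym2 V} (he : e ∈ unclaimed board Cl W) (ha : a ∉ e) :
    e ∈ unclaimed board (insert s(a, b) Cl) (insert s(a, c) W) := by
  refine mem_unclaimed_insert.2 ⟨he, ?_, ?_⟩ <;> rintro rfl <;> exact ha (Sym2.mem_mk_left _ _)

namespace IsFree

theorem mono (hS : IsFree board Cl W S) (hTS : T ⊆ S) : IsFree board Cl W T :=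
  fun v hv w hw ↦ hS v (hTS hv) w (hTS hw)

theorem insert_insert_of_notMem (hS : IsFree board Cl W S) (ha : a ∉ S) :
    IsFree board (insert s(a, b) Cl) (insert s(a, c) W) S := by
  intro v hv w hw hvw
  refine mem_unclaimed_insert_of_notMem (hS v hv w hw hvw) ?_
  rw [Sym2.mem_iff]
  rintro (rfl | rfl)
  · exact ha hv
  · exact ha hw

end IsFree

/-- Client owns a path in `S` with ends `x`, `y` and inner vertices `q`, and the edges from the
vertices of `S` off this path to all vertices of `S` other than `q` are unclaimed. -/
structure IsExtendable (board Cl W : Finset (Sym2 V)) (S : Finset V) (x : V) (q : List V)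
    (y : V) : Prop extends IsPathIn Cl S (x :: (q ++ [y])) where
  free : ∀ v ∈ S, v ∉ x :: (q ++ [y]) → ∀ w ∈ S, w ∉ q → v ≠ w → s(v, w) ∈ unclaimed board Cl W

namespace IsExtendable

variable {q : List V} {v : V}

theorem symm (h : IsExtendable board Cl W S x q y) :
    IsExtendable board Cl W S y q.reverse x where
  toIsPathIn := by simpa using h.toIsPathIn.reverse
  free v hv hvp w hw hwq := h.free v hv (by grind) w hw (by simpa using hwq)

theorem insert_left (h : IsExtendable board Cl W S x q y) (hv : v ∈ S)
    (hvp : v ∉ x :: (q ++ [y])) :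
    IsExtendable board (insert s(x, v) Cl) (insert s(y, v) W) S v (x :: q) y where
  toIsPathIn := h.toIsPathIn.cons hv hvp
  free u hu hup w hw hwq huw := by
    have huw' := h.free u hu (by grind) w hw (by grind) huw
    rw [mem_unclaimed_insert]
    grind

theorem insert_right (h : IsExtendable board Cl W S x q y) (hv : v ∈ S)
    (hvp : v ∉ x :: (q ++ [y])) :
    IsExtendable board (insert s(y, v) Cl) (insert s(x, v) W) S v (y :: q.reverse) x :=
  h.symm.insert_left hv (by grind)

theorem of_isFree_sdiff (hp : IsPathIn Cl S (x :: (q ++ [y])))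
    (hS : IsFree board Cl W (S \ q.toFinset)) : IsExtendable board Cl W S x q y where
  toIsPathIn := hp
  free v hv hvp w hw hwq hvw := hS v (by simp_all) w (by simp_all) hvw

theorem isFree_sdiff (h : IsExtendable board Cl W S x q y) :
    IsFree board Cl W (S \ (x :: (q ++ [y])).toFinset) := by
  intro v hv w hw
  simp only [mem_sdiff, List.mem_toFinset] at hv hw
  exact h.free v hv.1 hv.2 w hw.1 (by grind)

end IsExtendable

/-- In the position `(Cl, W)` Client owns an extendable path in `S` on `m` vertices; the position
comes last to make this a winning condition. -/
def HasExtendablePath (board : Finset (Sym2 V)) (S : Finset V) (m : ℕ)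
    (Cl W : Finset (Sym2 V)) : Prop :=
  ∃ x q y, IsExtendable board Cl W S x q y ∧ q.length + 2 = m

theorem HasExtendablePath.waiterWins_add {m : ℕ} (h : HasExtendablePath board S m Cl W) (s : ℕ)
    (hs : m + s ≤ #S) : WaiterWins board 1 (HasExtendablePath board S (m + s)) s Cl W := by
  induction s generalizing Cl W m with
  | zero => exact .of_win h
  | succ s ih =>
    obtain ⟨x, q, y, h, rfl⟩ := h
    obtain ⟨v, hv, hvp⟩ : ∃ v ∈ S, v ∉ (x :: (q ++ [y])).toFinset :=
      exists_mem_notMem_of_card_lt_card ((List.toFinset_card_le _).trans_lt (by simp; omega))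
    rw [List.mem_toFinset] at hvp
    have hxy : x ≠ y := by grind [h.nodup]
    have hx : s(x, v) ∈ unclaimed board Cl W := Sym2.eq_swap ▸
      h.free v hv hvp x (h.mem x (by simp)) (by grind [h.nodup]) (by grind)
    have hy : s(y, v) ∈ unclaimed board Cl W := Sym2.eq_swap ▸
      h.free v hv hvp y (h.mem y (by simp)) (by grind [h.nodup]) (by grind)
    rw [← Nat.add_assoc, Nat.add_right_comm]
    exact .offer_pair (Sym2.congr_left.not.2 hxy) hx hy
      (ih ⟨v, x :: q, y, h.insert_left hv hvp, by simp⟩ (by omega))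
      (ih ⟨v, y :: q.reverse, x, h.insert_right hv hvp, by simp⟩ (by omega))

theorem waiterWins_hasExtendablePath_of_path_three {u w : V} (hp : IsPathIn Cl S [a, b, x])
    (hS : IsFree board Cl W (S \ {a, b})) (hu : u ∈ S \ {a, b, x}) (hw : w ∈ S \ {a, b, x})
    (huw : u ≠ w) (hau : s(a, u) ∈ unclaimed board Cl W) (haw : s(a, w) ∈ unclaimed board Cl W) :
    WaiterWins board 1 (HasExtendablePath board S 4) 1 Cl W := by
  have extendable : ∀ u ∈ S \ {a, b, x}, ∀ w,
      HasExtendablePath board S 4 (insert s(a, u) Cl) (insert s(a, w) W) := by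
    intro u hu w
    refine ⟨u, [a, b], x, .of_isFree_sdiff (hp.cons (by grind) (by grind)) ?_, rfl⟩
    simpa using hS.insert_insert_of_notMem (by simp)
  exact .offer_pair (Sym2.congr_right.not.2 huw) hau haw
    (.of_win (extendable u hu w)) (.of_win (extendable w hw u))

theorem waiterWins_hasExtendablePath_of_path_two (hcard : 6 ≤ #S) (hp : IsPathIn Cl S [b, a])
    (hS : IsFree board Cl W (S.erase a))
    (hac : ∀ v ∈ S \ {a, b, c}, s(a, v) ∈ unclaimed board Cl W) :
    WaiterWins board 1 (HasExtendablePath board S 4) 2 Cl W := by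
  have hrest : 3 ≤ #(S \ {a, b, c}) := by
    have := le_card_sdiff {a, b, c} S
    have := card_le_three (a := a) (b := b) (c := c)
    omega
  obtain ⟨x, hx, y, hy, u, hu, hxy, hxu, hyu⟩ := two_lt_card.1 hrest
  have hab : a ≠ b := by grind [hp.nodup]
  have hb : b ∈ S := hp.mem b (by simp)
  have next_round : ∀ x ∈ S \ {a, b, c}, ∀ y ∈ S \ {a, b, c}, x ≠ y → x ≠ u → y ≠ u →
      WaiterWins board 1 (HasExtendablePath board S 4) 1 (insert s(b, x) Cl)
        (insert s(b, y) W) := by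
    intro x hx y hy hxy hxu hyu
    simp only [mem_sdiff, mem_insert, mem_singleton, not_or] at hx hy hu
    have hp' : IsPathIn (insert s(b, x) Cl) S [x, b, a] := hp.cons hx.1 (by simp [hx])
    have hS' : IsFree board Cl W (S \ {a, b}) := hS.mono (by grind)
    exact waiterWins_hasExtendablePath_of_path_three hp'.reverse
      (hS'.insert_insert_of_notMem (by simp)) (u := u) (w := y) (by grind) (by grind) hyu.symm
      (mem_unclaimed_insert_of_notMem (hac u (by grind)) (by grind))
      (mem_unclaimed_insert_of_notMem (hac y (by grind)) (by grind))
  have hbx : s(b, x) ∈ unclaimed board Cl W := hS b (by grind) x (by grind) (by grind)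
  have hby : s(b, y) ∈ unclaimed board Cl W := hS b (by grind) y (by grind) (by grind)
  exact .offer_pair (Sym2.congr_right.not.2 hxy) hbx hby
    (next_round x hx y hy hxy hxu hyu) (next_round y hy x hx hxy.symm hyu hxu)

theorem IsFree.waiterWins_hasExtendablePath (hS : IsFree board Cl W S) (hcard : 6 ≤ #S) :
    WaiterWins board 1 (HasExtendablePath board S 4) 3 Cl W := by
  obtain ⟨a, ha, b, hb, c, hc, hab, hac, hbc⟩ := two_lt_card.1 (by omega : 2 < #S)
  have next_round : ∀ b ∈ S, ∀ c, a ≠ b →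
      WaiterWins board 1 (HasExtendablePath board S 4) 2 (insert s(a, b) Cl)
        (insert s(a, c) W) := by
    intro b hb c hab
    have hp : IsPathIn Cl S [a] := ⟨by simp, by simpa using ha, by simp⟩
    refine waiterWins_hasExtendablePath_of_path_two (c := c) hcard
      (hp.cons hb (by simpa using hab.symm))
      ((hS.mono (erase_subset a S)).insert_insert_of_notMem (by simp)) fun v hv ↦ ?_
    simp only [mem_sdiff, mem_insert, mem_singleton, not_or] at hv
    exact mem_unclaimed_insert.2 ⟨hS a ha v hv.1 (Ne.symm hv.2.1),
      Sym2.congr_right.not.2 hv.2.2.1, Sym2.congr_right.not.2 hv.2.2.2⟩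
  exact .offer_pair (Sym2.congr_right.not.2 hbc) (hS a ha b hb hab) (hS a ha c hc hac)
    (next_round b hb c hab) (next_round c hc b hac)

theorem IsFree.waiterWins_path (hS : IsFree board Cl W S) (hk : 4 ≤ k) (hkS : k ≤ #S)
    (hcard : 6 ≤ #S) :
    WaiterWins board 1 (fun Cl' W' ↦ ∃ p, IsPathIn Cl' S p ∧ p.length = k ∧
      IsFree board Cl' W' (S \ p.toFinset)) (k - 1) Cl W := by
  obtain ⟨s, rfl⟩ := Nat.exists_eq_add_of_le hk
  rw [show 4 + s - 1 = 3 + (s + 0) by omega]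
  refine (hS.waiterWins_hasExtendablePath hcard).bind fun Cl' W' _ hpath ↦
    (hpath.waiterWins_add s hkS).bind fun Cl'' W'' _ hpath ↦ .of_win ?_
  obtain ⟨x, q, y, h, hq⟩ := hpath
  exact ⟨x :: (q ++ [y]), h.toIsPathIn, by simpa using hq, h.isFree_sdiff⟩

theorem IsFree.waiterWins_isPathPacking (hS : IsFree board Cl W S) (hk : 6 ≤ k) (m : ℕ)
    (hcard : k * m ≤ #S) :
    WaiterWins board 1 (fun Cl' _ ↦ ∃ L, IsPathPacking k Cl' S L ∧ L.length = m)
      ((k - 1) * m) Cl W := by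
  induction m generalizing Cl W S with
  | zero => exact .of_win ⟨[], .nil, rfl⟩
  | succ m ih =>
    rw [Nat.mul_succ] at hcard
    rw [Nat.mul_succ, Nat.add_comm (_ * m)]
    refine (hS.waiterWins_path (by omega) (by omega) (by omega)).bind
      fun Cl' W' _ ⟨p, hp, hpk, hfree⟩ ↦ ?_
    have hcard' : k * m ≤ #(S \ p.toFinset) := by
      grind [le_card_sdiff p.toFinset S, List.toFinset_card_le p]
    exact (ih hfree hcard').bind (t := 0) fun Cl'' _ hCl ⟨L, hL, hLm⟩ ↦
      ⟨p :: L, hL.cons (hp.mono hCl Subset.rfl) hpk, by simpa using hLm⟩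

end PathBuilding

section Factors

variable {k n : ℕ}

theorem card_of_mem_factorFamily {E : Set (Sym2 (Fin k))} {A : Finset (Sym2 (Fin n))}
    (hA : A ∈ factorFamily k n E) : #A = n / k * E.ncard := by
  obtain ⟨g, hg, hA⟩ := hA
  have hg_inj : Function.Injective g.uncurry := fun p q hpq ↦ (hg _).unique hpq rfl
  let copy : Fin (n / k) × Sym2 (Fin k) → Sym2 (Fin n) := fun p ↦ Sym2.map (g p.1) p.2
  have hcopy : Function.Injective copy := by
    have hmk : Function.Injective fun p : Fin (n / k) × Sym2 (Fin k) ↦ p.2.map (Prod.mk p.1) := by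
      rintro ⟨i, e⟩ ⟨j, f⟩ hef
      induction e, f using Sym2.inductionOn₂
      simp only [Sym2.map_mk, Sym2.eq_iff, Prod.mk.injEq] at hef ⊢
      tauto
    convert (Sym2.map.injective hg_inj).comp hmk using 2 with p
    simp [copy, Sym2.map_map, Function.comp_def]
  have hA' : (A : Set (Sym2 (Fin n))) = copy '' Set.univ ×ˢ E := by
    rw [hA]
    ext e
    simp [copy]
  rw [← Set.ncard_coe_finset, hA', Set.ncard_image_of_injective _ hcopy, Set.ncard_prod,
    Set.ncard_univ, Nat.card_fin]

theorem ncard_pathEdges : (pathEdges k).ncard = k - 1 := by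
  cases k with
  | zero => simp [pathEdges]
  | succ m =>
    have hrange : pathEdges (m + 1) = Set.range fun i : Fin m ↦ s(i.castSucc, i.succ) := by
      ext e
      constructor
      · rintro ⟨i, j, rfl, hij⟩
        exact ⟨⟨i, by omega⟩, congrArg (s(i, ·)) (Fin.ext hij.symm)⟩
      · rintro ⟨i, rfl⟩
        exact ⟨i.castSucc, i.succ, rfl, by simp⟩
    have hinj : Function.Injective fun i : Fin m ↦ s(i.castSucc, i.succ) := by
      intro i j hij
      simp only [Sym2.eq_iff, Fin.ext_iff, Fin.val_castSucc, Fin.val_succ] at hij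
      omega
    rw [hrange, Set.ncard_range_of_injective hinj, Nat.card_fin, Nat.add_sub_cancel]

theorem IsPathPacking.exists_mem_factorFamily_subset {E : Finset (Sym2 (Fin n))}
    {S : Finset (Fin n)} {L : List (List (Fin n))} (hL : IsPathPacking k E S L) (hkn : k ∣ n)
    (hLn : L.length = n / k) : ∃ A ∈ factorFamily k n (pathEdges k), A ⊆ E := by
  have hlen (i : Fin (n / k)) : L[i].length = k := hL.length_eq _ (List.getElem_mem _)
  let g : Fin (n / k) → Fin k → Fin n := fun i j ↦ L[i][j]'(j.isLt.trans_eq (hlen i).symm)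
  have hcover : ∀ v, v ∈ L.flatten := by
    have huniv : L.flatten.toFinset = univ := by
      rw [← card_eq_iff_eq_univ, List.toFinset_card_of_nodup hL.nodup_flatten, hL.length_flatten,
        hLn, Nat.div_mul_cancel hkn, Fintype.card_fin]
    simp [← List.mem_toFinset, huniv]
  have hsurj : Function.Surjective g.uncurry := by
    intro v
    obtain ⟨p, hp, hv⟩ := List.mem_flatten.1 (hcover v)
    obtain ⟨i, hi, rfl⟩ := List.getElem_of_mem hp
    obtain ⟨j, hj, rfl⟩ := List.getElem_of_mem hv
    exact ⟨(⟨i, hLn ▸ hi⟩, ⟨j, hL.length_eq _ hp ▸ hj⟩), rfl⟩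
  have hbij : Function.Bijective g.uncurry :=
    (Fintype.bijective_iff_surjective_and_card _).2 ⟨hsurj, by simp [Nat.div_mul_cancel hkn]⟩
  have hsub : (⋃ i, Sym2.map (g i) '' pathEdges k) ⊆ (E : Set (Sym2 (Fin n))) := by
    refine Set.iUnion_subset fun i ↦ ?_
    rintro _ ⟨_, ⟨j, j', rfl, hj⟩, rfl⟩
    have hchain := (hL.isPathIn L[i] (List.getElem_mem _)).isChain
    simpa [g, hj] using List.isChain_iff_getElem.1 hchain j (by grind)
  refine ⟨(E.finite_toSet.subset hsub).toFinset, ⟨g, hbij.existsUnique, by simp⟩, ?_⟩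
  simpa using hsub

theorem WC_path_factor_general (hk : 6 ≤ k) (hkn : k ∣ n) :
    tauWC (Kedges n) (factorFamily k n (pathEdges k)) 1 = (k - 1) * (n / k) := by
  have hfree : IsFree (Kedges n) ∅ ∅ univ := by
    simp [IsFree, unclaimed, Kedges]
  refine tauWC_eq_of_forall_le_card ?_ fun A hA ↦ ?_
  · exact (hfree.waiterWins_isPathPacking hk (n / k) (by simp [Nat.mul_div_cancel' hkn])).bind
      (t := 0) fun Cl _ _ ⟨L, hL, hLn⟩ ↦ hL.exists_mem_factorFamily_subset hkn hLn
  · rw [card_of_mem_factorFamily hA, ncard_pathEdges, Nat.mul_comm]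

end Factors

/-- For every large enough `k`, if `T` is a path on `k` vertices, then for every large enough
`n` divisible by `k`, in the unbiased Waiter-Client game on `K_n` whose winning sets are the
`T`-factors of `K_n`, Waiter wins in exactly `((k−1)/k)·n` rounds. -/
theorem WC_path_factor :
    ∃ k₀ : ℕ, ∀ k : ℕ, k₀ ≤ k →
      ∃ n₀ : ℕ, ∀ n : ℕ, n₀ ≤ n → k ∣ n →
        tauWC (Kedges n) (factorFamily k n (pathEdges k)) 1 = (k - 1) * (n / k) := by
  exact ⟨6, fun k hk ↦ ⟨0, fun n _ hkn ↦ WC_path_factor_general hk hkn⟩⟩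
end

section
/- In an unbiased Waiter-Client game played on the edge set of K₁₂, for any two fixed vertices u and v, Waiter has a strategy such that within 7 rounds Client's claimed edges contain two vertex-disjoint triangles with the following additional properties: (1) u and v each lie in one of the two triangles, and (2) no edge with both endpoints among the 6 vertices not covered by the two triangles has been offered, and the edge uv has not been offered. -/
open Finset

/-!
In every round Waiter offers two edges that are exchanged by an automorphism of the current
position, so Client's two answers are equivalent and only one line of play has to be followed.

Four rounds, two at `u` and two at `v`, each offering two edges to untouched vertices, give Client
two neighbours of `u` and two other neighbours of `v`. Waiter then offers both edges that would
close a triangle, and Client closes the one at, say, `u`. A sixth round gives Client a third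
neighbour `c` of `v`, and the last offer consists of the edges from `c` to the two earlier
neighbours of `v`: either answer completes a triangle at `v` through `c`. The vertices used are
`u`, `v` and the two far ends of each of five offers, twelve in all. Every offered edge has an end
in one of the triangles, since the edge refused in the fifth round joins the two earlier neighbours
of `v`, one of which belongs to the triangle at `v`.
-/

namespace WaiterWins

variable {X Y : Type*} [DecidableEq X] [DecidableEq Y] {board : Finset X} {b t : ℕ}
  {win : Finset X → Finset X → Prop} {Cl W : Finset X}

protected theorem map (f : X ↪ Y) {win' : Finset Y → Finset Y → Prop}
    (hwin : ∀ Cl W, win Cl W → win' (Cl.map f) (W.map f)) (h : WaiterWins board b win t Cl W) :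
    WaiterWins (board.map f) b win' t (Cl.map f) (W.map f) := by
  induction t generalizing Cl W with
  | zero => exact hwin _ _ h
  | succ t ih =>
    rcases h with h | ⟨O, hO, hO_free, hO_card, hnext⟩
    · exact .inl (hwin _ _ h)
    · have hfree : board.map f \ (Cl.map f ∪ W.map f) = (board \ (Cl ∪ W)).map f := by
        rw [Finset.map_sdiff, map_union]
      refine .inr ⟨O.map f, hO.map, ?_, ?_, forall_mem_map.2 fun x hx => ?_⟩
      · rwa [hfree, map_subset_map]
      · rwa [hfree, card_map, card_map]
      · simpa only [map_insert, map_union, map_erase] using ih (hnext x hx)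

theorem mono_board {board' : Finset X} (hboard : board ⊆ board')
    (hcard : (b + 1) * t ≤ #(board \ (Cl ∪ W))) (h : WaiterWins board b win t Cl W) :
    WaiterWins board' b win t Cl W := by
  induction t generalizing Cl W with
  | zero => exact h
  | succ t ih =>
    refine h.imp_right ?_
    rintro ⟨O, hO, hO_free, hO_card, hnext⟩
    have hfree : board \ (Cl ∪ W) ⊆ board' \ (Cl ∪ W) := sdiff_subset_sdiff hboard le_rfl
    have hfree_card := card_le_card hfree
    rw [Nat.mul_succ] at hcard
    have hO_card' : #O = b + 1 := by omega
    refine ⟨O, hO, hO_free.trans hfree, by omega, fun x hx => ih ?_ (hnext x hx)⟩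
    have hfree_next : board \ (insert x Cl ∪ (W ∪ O.erase x)) = (board \ (Cl ∪ W)) \ O := by
      rw [insert_union, ← union_assoc, ← union_insert, insert_erase hx]
      exact sdiff_sdiff_left.symm
    rw [hfree_next, card_sdiff_of_subset hO_free]
    omega

theorem of_offer_pair {e f : X} (hef : e ≠ f) (he : e ∈ board \ (Cl ∪ W))
    (hf : f ∈ board \ (Cl ∪ W)) (h_left : WaiterWins board 1 win t (insert e Cl) (insert f W))
    (h_right : WaiterWins board 1 win t (insert f Cl) (insert e W)) :
    WaiterWins board 1 win (t + 1) Cl W := by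
  have hsub : {e, f} ⊆ board \ (Cl ∪ W) := insert_subset he (singleton_subset_iff.2 hf)
  have hcard : min (1 + 1) #(board \ (Cl ∪ W)) = 2 :=
    min_eq_left ((card_pair hef).symm.trans_le (card_le_card hsub))
  refine .inr ⟨{e, f}, insert_nonempty _ _, hsub, by rw [card_pair hef, hcard], ?_⟩
  simp only [forall_mem_insert, mem_singleton, forall_eq]
  constructor
  · rwa [erase_insert (notMem_singleton.2 hef), union_singleton]
  · rwa [pair_comm, erase_insert (notMem_singleton.2 hef.symm), union_singleton]

/-- Since `σ` exchanges `e` and `f` and fixes the rest of the position, Client's two answers lead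
to isomorphic positions. -/
theorem of_symm_offer {e f : X} (σ : X ↪ X) (hboard : board.map σ = board)
    (hwin : ∀ Cl W, win Cl W → win (Cl.map σ) (W.map σ)) (hCl : Cl.map σ = Cl)
    (hW : W.map σ = W) (he_map : σ e = f) (hf_map : σ f = e) (hef : e ≠ f)
    (he : e ∈ board \ (Cl ∪ W)) (h : WaiterWins board 1 win t (insert e Cl) (insert f W)) :
    WaiterWins board 1 win (t + 1) Cl W := by
  have hf : f ∈ board \ (Cl ∪ W) := by
    rw [← he_map, ← hboard, ← hCl, ← hW, ← map_union, ← Finset.map_sdiff]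
    exact mem_map_of_mem σ he
  refine of_offer_pair hef he hf h ?_
  simpa only [map_insert, hboard, hCl, hW, he_map, hf_map] using h.map σ hwin

end WaiterWins

/-- The goal of the game: Client owns two disjoint triangles covering `u` and `v`, and neither `uv`
nor any edge between two uncovered vertices has been claimed. The triangles are encoded by an
injective enumeration `x` of their six vertices, the first three of which form one triangle. -/
def TwoTrianglesThrough {V : Type*} (u v : V) (Cl W : Finset (Sym2 V)) : Prop :=
  ∃ x : Fin 6 → V, Function.Injective x ∧
    s(x 0, x 1) ∈ Cl ∧ s(x 0, x 2) ∈ Cl ∧ s(x 1, x 2) ∈ Cl ∧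
    s(x 3, x 4) ∈ Cl ∧ s(x 3, x 5) ∈ Cl ∧ s(x 4, x 5) ∈ Cl ∧
    u ∈ Set.range x ∧ v ∈ Set.range x ∧
    (∀ a b : V, a ∉ Set.range x → b ∉ Set.range x → s(a, b) ∉ Cl ∧ s(a, b) ∉ W) ∧
    s(u, v) ∉ Cl ∧ s(u, v) ∉ W

namespace TwoTrianglesThrough

theorem of_sym2_eq {V : Type*} {u v u' v' : V} {Cl W : Finset (Sym2 V)}
    (h : TwoTrianglesThrough u v Cl W) (huv : s(u, v) = s(u', v')) :
    TwoTrianglesThrough u' v' Cl W := by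
  rcases Sym2.eq_iff.1 huv with ⟨rfl, rfl⟩ | ⟨rfl, rfl⟩
  · exact h
  · obtain ⟨x, hx, h01, h02, h12, h34, h35, h45, hu, hv, hrest, huv⟩ := h
    exact ⟨x, hx, h01, h02, h12, h34, h35, h45, hv, hu, hrest, Sym2.eq_swap (a := u) ▸ huv⟩

protected theorem map {V V' : Type*} {u v : V} {Cl W : Finset (Sym2 V)} (p : V ↪ V')
    (h : TwoTrianglesThrough u v Cl W) :
    TwoTrianglesThrough (p u) (p v) (Cl.map p.sym2Map) (W.map p.sym2Map) := by
  obtain ⟨x, hx, h01, h02, h12, h34, h35, h45, ⟨i, rfl⟩, ⟨j, rfl⟩, hrest, huv⟩ := h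
  have mem {E : Finset (Sym2 V)} {a b : V} : s(p a, p b) ∈ E.map p.sym2Map ↔ s(a, b) ∈ E :=
    mem_map' p.sym2Map (a := s(a, b))
  have hrest' {E : Finset (Sym2 V)}
      (hE : ∀ a b, a ∉ Set.range x → b ∉ Set.range x → s(a, b) ∉ E) {a b : V'}
      (ha : a ∉ Set.range (p ∘ x)) (hb : b ∉ Set.range (p ∘ x)) : s(a, b) ∉ E.map p.sym2Map := by
    intro hab
    obtain ⟨e, he, hpe⟩ := mem_map.1 hab
    induction e with | _ c d
    rcases Sym2.eq_iff.1 hpe with ⟨rfl, rfl⟩ | ⟨rfl, rfl⟩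
    · exact hE c d (fun ⟨i, hi⟩ => ha ⟨i, congrArg p hi⟩) (fun ⟨i, hi⟩ => hb ⟨i, congrArg p hi⟩) he
    · exact hE c d (fun ⟨i, hi⟩ => hb ⟨i, congrArg p hi⟩) (fun ⟨i, hi⟩ => ha ⟨i, congrArg p hi⟩) he
  exact ⟨p ∘ x, p.injective.comp hx, mem.2 h01, mem.2 h02, mem.2 h12, mem.2 h34, mem.2 h35,
    mem.2 h45, ⟨i, rfl⟩, ⟨j, rfl⟩, fun a b ha hb =>
      ⟨hrest' (fun a b ha hb => (hrest a b ha hb).1) ha hb,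
        hrest' (fun a b ha hb => (hrest a b ha hb).2) ha hb⟩,
    mem.not.2 huv.1, mem.not.2 huv.2⟩

end TwoTrianglesThrough

theorem Kedges_eq_edgeFinset_top (n : ℕ) : Kedges n = (⊤ : SimpleGraph (Fin n)).edgeFinset := by
  ext e
  simp [Kedges]

theorem map_Kedges_perm {n : ℕ} (σ : Equiv.Perm (Fin n)) :
    (Kedges n).map σ.toEmbedding.sym2Map = Kedges n := by
  refine eq_of_subset_of_card_le ?_ (card_map _).ge
  simp [Kedges, subset_iff, Sym2.isDiag_map σ.injective]

theorem WaiterWins.of_perm_offer {n t : ℕ} {u v : Fin n} {Cl W : Finset (Sym2 (Fin n))}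
    (e f : Sym2 (Fin n)) (σ : Equiv.Perm (Fin n))
    (hσ : s(σ u, σ v) = s(u, v) ∧ Cl.map σ.toEmbedding.sym2Map = Cl ∧
      W.map σ.toEmbedding.sym2Map = W ∧ e.map σ = f ∧ f.map σ = e)
    (he : e ∈ Kedges n \ (Cl ∪ W) ∧ e ≠ f)
    (h : WaiterWins (Kedges n) 1 (TwoTrianglesThrough u v) t (insert e Cl) (insert f W)) :
    WaiterWins (Kedges n) 1 (TwoTrianglesThrough u v) (t + 1) Cl W := by
  obtain ⟨huv, hCl, hW, hef, hfe⟩ := hσ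
  exact .of_symm_offer σ.toEmbedding.sym2Map (map_Kedges_perm σ)
    (fun _ _ h => (h.map σ.toEmbedding).of_sym2_eq huv) hCl hW hef hfe he.2 he.1 h

open Equiv in
/-- The vertices `2, …, 5` are the prospective neighbours of `0`, the vertices `6, …, 11` those
of `1`. The symmetry of the fifth round interchanges `0` and `1`, that of the last round the two
neighbours of `1` that Client already has. -/
theorem waiterWins_twoTrianglesThrough_zero_one :
    WaiterWins (Kedges 12) 1 (TwoTrianglesThrough 0 1) 7 ∅ ∅ := by
  refine .of_perm_offer s(0, 2) s(0, 3) (swap 2 3) (by decide) (by decide) ?_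
  refine .of_perm_offer s(0, 4) s(0, 5) (swap 4 5) (by decide) (by decide) ?_
  refine .of_perm_offer s(1, 6) s(1, 7) (swap 6 7) (by decide) (by decide) ?_
  refine .of_perm_offer s(1, 8) s(1, 9) (swap 8 9) (by decide) (by decide) ?_
  refine .of_perm_offer s(2, 4) s(6, 8)
    (swap 0 1 * swap 2 6 * swap 3 7 * swap 4 8 * swap 5 9) (by decide) (by decide) ?_
  refine .of_perm_offer s(1, 10) s(1, 11) (swap 10 11) (by decide) (by decide) ?_
  refine .of_perm_offer s(6, 10) s(8, 10) (swap 6 8 * swap 7 9) (by decide) (by decide) ?_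
  exact ⟨![0, 2, 4, 1, 6, 10], by decide⟩

theorem exists_equiv_fin_apply_zero_one {α : Type*} [Fintype α] {n : ℕ}
    (hα : Fintype.card α = n + 2) {u v : α} (huv : u ≠ v) :
    ∃ p : Fin (n + 2) ≃ α, p 0 = u ∧ p 1 = v := by
  let q := (Fintype.equivFinOfCardEq hα).symm
  obtain ⟨σ, hu, hv⟩ := MulAction.is_two_pretransitive_iff.1
    (Equiv.Perm.isMultiplyPretransitive α 2) (q.injective.ne (zero_ne_one (α := Fin (n + 2)))) huv
  exact ⟨q.trans σ, hu, hv⟩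

theorem map_Kedges_subset_edgeFinset {V : Type*} {G : SimpleGraph V} [Fintype G.edgeSet]
    {n : ℕ} (p : Fin n ↪ V) (hp : ∀ i j, i ≠ j → G.Adj (p i) (p j)) :
    (Kedges n).map p.sym2Map ⊆ G.edgeFinset := by
  intro e he
  obtain ⟨d, hd, rfl⟩ := mem_map.1 he
  induction d with | _ i j
  have hij : i ≠ j := by simpa [Kedges] using hd
  exact SimpleGraph.mem_edgeFinset.2 (hp i j hij)

theorem WC_two_triangles_K12_general {V : Type*} [DecidableEq V] {G : SimpleGraph V}
    [Fintype G.edgeSet] {S : Finset V} (hS : G.IsNClique 12 S) {u v : V} (hu : u ∈ S)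
    (hv : v ∈ S) (huv : u ≠ v) :
    WaiterWins G.edgeFinset 1 (TwoTrianglesThrough u v) 7 ∅ ∅ := by
  have hS_card : Fintype.card S = 12 := by rw [Fintype.card_coe, hS.card_eq]
  obtain ⟨q, hq0, hq1⟩ := exists_equiv_fin_apply_zero_one hS_card
    (u := ⟨u, hu⟩) (v := ⟨v, hv⟩) (Subtype.coe_ne_coe.1 huv)
  let p : Fin 12 ↪ V := q.toEmbedding.trans (.subtype _)
  obtain ⟨rfl, rfl⟩ : p 0 = u ∧ p 1 = v := ⟨congrArg Subtype.val hq0, congrArg Subtype.val hq1⟩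
  have hclique : (Kedges 12).map p.sym2Map ⊆ G.edgeFinset :=
    map_Kedges_subset_edgeFinset p fun i j hij =>
      hS.isClique (q i).2 (q j).2 (p.injective.ne hij)
  refine (waiterWins_twoTrianglesThrough_zero_one.map p.sym2Map fun _ _ h => h.map p).mono_board
    hclique ?_
  rw [union_empty, sdiff_empty, card_map]
  decide

/-- In the unbiased Waiter-Client game on the edge set of `K₁₂`, for any two fixed vertices
`u ≠ v`, Waiter has a strategy such that within `7` rounds Client's claimed edges contain two
vertex-disjoint triangles `{x 0, x 1, x 2}` and `{x 3, x 4, x 5}` with: (1) `u` and `v` both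
among the six triangle vertices, and (2) no edge with both endpoints among the six vertices not
covered by the triangles has been offered (i.e. claimed by either player), and the edge `uv`
has not been offered. -/
theorem WC_two_triangles_K12 :
    ∀ u v : Fin 12, u ≠ v →
      WaiterWins (Kedges 12) 1
        (fun Cl W => ∃ x : Fin 6 → Fin 12, Function.Injective x ∧
          -- two vertex-disjoint triangles in Client's graph
          s(x 0, x 1) ∈ Cl ∧ s(x 0, x 2) ∈ Cl ∧ s(x 1, x 2) ∈ Cl ∧
          s(x 3, x 4) ∈ Cl ∧ s(x 3, x 5) ∈ Cl ∧ s(x 4, x 5) ∈ Cl ∧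
          -- (1) both `u` and `v` lie in the two triangles
          u ∈ Set.range x ∧ v ∈ Set.range x ∧
          -- (2) edges among the remaining six vertices, and the edge `uv`, were never offered
          (∀ a b : Fin 12, a ∉ Set.range x → b ∉ Set.range x →
            s(a, b) ∉ Cl ∧ s(a, b) ∉ W) ∧
          s(u, v) ∉ Cl ∧ s(u, v) ∉ W)
        7 ∅ ∅ := by
  intro u v huv
  rw [Kedges_eq_edgeFinset_top]
  exact WC_two_triangles_K12_general (S := univ) (by simp [SimpleGraph.isNClique_iff])
    (mem_univ u) (mem_univ v) huv
end
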